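/- Let L be a finite ULD lattice with L ∈ L(CFG). Then L is order-isomorphic to the configuration space of a chip firing game on an acyclic directed multigraph reaching a unique fixed point if and only if the directed graph 𝒢 (on the meet-irreducibles of L) is acyclic. -/

import Mathlib

open Classical

section CFGdefs

variable {V : Type*}

/-- Out-degree of a vertex in a directed multigraph with edge multiplicities `E`. -/
noncomputable def outDeg (E : V → V → ℕ) (v : V) : ℕ := ∑ᶠ u, E v u

/-- A vertex is a sink if all its outgoing edges are loops. -/
def IsSink (E : V → V → ℕ) (v : V) : Prop := outDeg E v = E v v

/-- A vertex is firable in configuration `c`. -/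
def Firable (E : V → V → ℕ) (c : V → ℕ) (v : V) : Prop :=
  ¬ IsSink E v ∧ outDeg E v ≤ c v

/-- The result of firing vertex `v` in configuration `c`. -/
noncomputable def fire (E : V → V → ℕ) (c : V → ℕ) (v : V) : V → ℕ :=
  fun u => if u = v then c v - outDeg E v + E v v else c u + E v u

/-- The configuration obtained by firing a list of vertices in order. -/
noncomputable def fireList (E : V → V → ℕ) : (V → ℕ) → List V → (V → ℕ)
  | c, [] => c
  | c, v :: l => fireList E (fire E c v) l

/-- A list of vertices is a valid firing sequence from `c`. -/
def ValidSeq (E : V → V → ℕ) : (V → ℕ) → List V → Prop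
  | _, [] => True
  | c, v :: l => Firable E c v ∧ ValidSeq E (fire E c v) l

/-- `c'` is reachable from `c` by a finite sequence of firings. -/
def Reaches (E : V → V → ℕ) (c c' : V → ℕ) : Prop :=
  ∃ l : List V, ValidSeq E c l ∧ fireList E c l = c'

/-- A configuration with no firable vertex. -/
def FixedPt (E : V → V → ℕ) (c : V → ℕ) : Prop := ∀ v, ¬ Firable E c v

/-- The chip firing game `CFG(G,O)` reaches a unique fixed point. -/
def ReachesUFP (E : V → V → ℕ) (O : V → ℕ) : Prop :=
  ∃ fp : V → ℕ, Reaches E O fp ∧ FixedPt E fp ∧ ∀ c, Reaches E O c → Reaches E c fp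

/-- The game is simple: in every firing sequence from `O` to the fixed point,
each vertex fires at most once. -/
def SimpleCFG (E : V → V → ℕ) (O : V → ℕ) : Prop :=
  ∀ l : List V, ValidSeq E O l → FixedPt E (fireList E O l) → l.Nodup

/-- Single firing step from `c` to `c'` by firing vertex `v`. -/
def FireStep (E : V → V → ℕ) (c : V → ℕ) (v : V) (c' : V → ℕ) : Prop :=
  Firable E c v ∧ fire E c v = c'

/-- The partial order `L` is order-isomorphic to the configuration space of
`CFG(G,O)` ordered by reachability. -/
def Generates (E : V → V → ℕ) (O : V → ℕ) (L : Type*) [PartialOrder L] : Prop :=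
  ∃ f : L ≃ {c : V → ℕ // Reaches E O c},
    ∀ a b : L, a ≤ b ↔ Reaches E (f a).val (f b).val

/-- The support graph is connected (as an undirected graph). -/
def ConnectedG (E : V → V → ℕ) : Prop :=
  ∀ u v : V, Relation.ReflTransGen (fun a b => 0 < E a b ∨ 0 < E b a) u v

/-- The support graph together with its initial data is an Abelian Sandpile Model. -/
def IsASM (E : V → V → ℕ) : Prop :=
  ConnectedG E ∧ ∃ s : V, IsSink E s ∧ (∀ v, IsSink E v → v = s) ∧
    ∀ v₁ v₂ : V, v₁ ≠ v₂ → v₁ ≠ s → v₂ ≠ s → E v₁ v₂ = E v₂ v₁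

/-- The directed multigraph has no directed cycle. -/
def AcyclicG (E : V → V → ℕ) : Prop :=
  ∀ v : V, ¬ Relation.TransGen (fun a b => 0 < E a b) v v

end CFGdefs

/-- `L` is generated by some chip firing game reaching a unique fixed point. -/
def MemLCFG (L : Type*) [PartialOrder L] : Prop :=
  ∃ (V : Type) (_ : Finite V) (E : V → V → ℕ) (O : V → ℕ),
    ReachesUFP E O ∧ Generates E O L

/-- `L` is generated by some Abelian Sandpile Model reaching a unique fixed point. -/
def MemLASM (L : Type*) [PartialOrder L] : Prop :=
  ∃ (V : Type) (_ : Finite V) (E : V → V → ℕ) (O : V → ℕ),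
    IsASM E ∧ ReachesUFP E O ∧ Generates E O L

section Latticedefs

variable {L : Type*} [Lattice L]

/-- `m` is meet-irreducible: it has exactly one upper cover. -/
def MeetIrred (m : L) : Prop := ∃! y, m ⋖ y

/-- `j` is join-irreducible: it has exactly one lower cover. -/
def JoinIrred (j : L) : Prop := ∃! y, y ⋖ j

/-- The set `M_x \ M_y` of meet-irreducibles above `x` but not above `y`. -/
def MsetDiff (x y : L) : Set L := {m | MeetIrred m ∧ x ≤ m ∧ ¬ y ≤ m}

/-- The set `M \ M_a` of meet-irreducibles not above `a`. -/
def MnotAbove (a : L) : Set L := {m | MeetIrred m ∧ ¬ a ≤ m}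

/-- `x⁺`: the join of all upper covers of `x`. -/
noncomputable def uplus [Fintype L] [OrderBot L] (x : L) : L :=
  Finset.univ.sup (fun y => if x ⋖ y then y else ⊥)

/-- `L` is upper locally distributive: for every `x ≠ ⊤` the interval `[x, x⁺]`
is isomorphic to a Boolean lattice (a hypercube). -/
def IsULD (L : Type*) [Lattice L] [Fintype L] [BoundedOrder L] : Prop :=
  ∀ x : L, x ≠ ⊤ → ∃ n : ℕ, Nonempty (↥(Set.Icc x (uplus x)) ≃o Set (Fin n))

/-- `𝔘_m`: the minimal elements of `{x : ∃ y, x ⋖ y and 𝔪(x,y) = m}`. -/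
def Uset (m : L) : Set L :=
  {x | Minimal (fun z => ∃ y, z ⋖ y ∧ MsetDiff z y = {m}) x}

/-- `𝔏_m`: the maximal elements of `{x : a ≰ x for every a ∈ 𝔘_m}`. -/
def Lset (m : L) : Set L :=
  {x | Maximal (fun z => ∀ a ∈ Uset m, ¬ a ≤ z) x}

/-- `(w, e)` is a (non-negative integer) solution of the system `E(m)`. -/
def SolvesE [OrderBot L] (m : L) (w : ℕ) (e : L → ℕ) : Prop :=
  (Uset m = {(⊥ : L)} → 1 ≤ w) ∧
  (Uset m ≠ {(⊥ : L)} →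
    (∀ a ∈ Lset m, (∑ᶠ x ∈ MnotAbove a, e x) < w) ∧
    (∀ a ∈ Uset m, w ≤ ∑ᶠ x ∈ MnotAbove a, e x))

/-- The system `E(m)` has a non-negative integer solution. -/
def HasSolE [OrderBot L] (m : L) : Prop := ∃ w e, SolvesE m w e

/-- The variable `e_{x,m}` occurs in the system `𝔈(m)`. -/
def VarOccurs [OrderBot L] (x m : L) : Prop :=
  MeetIrred m ∧ Uset m ≠ {(⊥ : L)} ∧ ∃ a ∈ Uset m ∪ Lset m, x ∈ MnotAbove a

/-- `(W, Ee)` is a non-negative integer solution of the system `Ω`. -/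
def SolvesOmega [OrderBot L] (W : L → ℕ) (Ee : L → L → ℕ) : Prop :=
  (∀ m : L, MeetIrred m → SolvesE m (W m) (fun x => Ee x m)) ∧
  (∀ m₁ m₂ : L, m₁ ≠ m₂ → VarOccurs m₁ m₂ → VarOccurs m₂ m₁ → Ee m₁ m₂ = Ee m₂ m₁)

/-- The edge relation of the directed graph `𝒢` on the meet-irreducibles. -/
def Gedge (m₁ m₂ : L) : Prop :=
  MeetIrred m₁ ∧ MeetIrred m₂ ∧ ∃ a ∈ Uset m₂, m₁ ∈ MnotAbove a

end Latticedefs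

/-- The system `Ω` has a non-negative integer solution. -/
def HasSolOmega (L : Type*) [Lattice L] [OrderBot L] : Prop :=
  ∃ W Ee, SolvesOmega (L := L) W Ee

/-- The directed graph `𝒢` on the meet-irreducibles is acyclic. -/
def GAcyclic (L : Type*) [Lattice L] : Prop :=
  ∀ m : L, ¬ Relation.TransGen (Gedge (L := L)) m m

/-!
A configuration of a game with a unique fixed point is determined by its shot vector, the multiset
of vertices fired to reach it, and reachability is inclusion of shot vectors. A meet-irreducible `m`
has exactly one firable vertex `v`, its label, and an element below `m` has a cover labelled by `m`
if and only if `v` is firable there and has fired as often as at `m`.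

If the game is acyclic, then minimality of `a ∈ 𝔘_m` lets only ancestors of the label of `m` (and
that label itself) fire on the way to `a`. Hence along an edge of `𝒢` either the label strictly
descends in the graph of the game, or it stays the same and its firing count grows, so `𝒢` is
acyclic.

Conversely, having fired `v` as often as at `m` and holding enough chips amount to a single linear
inequality on the set of meet-irreducibles not above the current element: the systems `E(m)` have
solutions. By minimality the weights not carried by edges of `𝒢` may be dropped. The game on the
meet-irreducibles with these weights as edges, and with a sink draining so many chips that every
vertex fires at most once, generates the lattice, and it is acyclic whenever `𝒢` is.
-/

section FiringSequences

variable {V : Type*} {E : V → V → ℕ} {c O : V → ℕ} {l l' : List V}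

theorem validSeq_append :
    ValidSeq E c (l ++ l') ↔ ValidSeq E c l ∧ ValidSeq E (fireList E c l) l' := by
  induction l generalizing c with
  | nil => simp [ValidSeq, fireList]
  | cons v l ih => simp [ValidSeq, fireList, ih, and_assoc]

theorem ValidSeq.concat {v : V} (hl : ValidSeq E c l) (hv : Firable E (fireList E c l) v) :
    ValidSeq E c (l ++ [v]) :=
  validSeq_append.2 ⟨hl, hv, trivial⟩

theorem fireList_append : fireList E c (l ++ l') = fireList E (fireList E c l) l' := by
  induction l generalizing c with
  | nil => rfl
  | cons v _ ih => exact ih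

theorem fire_apply_add {v : V} (h : outDeg E v ≤ c v) (u : V) :
    fire E c v u + (if u = v then outDeg E v else 0) = c u + E v u := by
  unfold fire
  split_ifs with huv
  · subst huv; omega
  · rfl

theorem fireList_apply_add (h : ValidSeq E c l) (v : V) :
    fireList E c l v + l.count v * outDeg E v = c v + (l.map (E · v)).sum := by
  induction l generalizing c with
  | nil => simp [fireList]
  | cons w l ih =>
    have hrest := ih h.2
    have hfire := fire_apply_add h.1.2 v
    have hcount : (w :: l).count v * outDeg E v =
        l.count v * outDeg E v + (if v = w then outDeg E w else 0) := by
      by_cases hvw : v = w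
      · subst hvw; simp [add_mul]
      · simp [hvw, Ne.symm hvw]
    rw [hcount, List.map_cons, List.sum_cons, fireList]
    omega

theorem fireList_eq_of_perm (hl : ValidSeq E c l) (hl' : ValidSeq E c l') (h : l.Perm l') :
    fireList E c l = fireList E c l' := by
  funext v
  have hv := fireList_apply_add hl v
  have hv' := fireList_apply_add hl' v
  rw [h.count_eq, (h.map _).sum_eq] at hv
  omega

theorem coe_append_singleton {α : Type*} (l : List α) (a : α) :
    ((l ++ [a] : List α) : Multiset α) = a ::ₘ (l : Multiset α) :=
  Multiset.coe_eq_coe.2 (List.perm_append_singleton a l)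

theorem cons_le_of_count_lt {α : Type*} [DecidableEq α] {s t : Multiset α} {a : α} (h : s ≤ t)
    (ha : s.count a < t.count a) : a ::ₘ s ≤ t := by
  refine Multiset.le_iff_count.2 fun b => ?_
  rw [Multiset.count_cons]
  split_ifs with hba
  · rw [hba]; exact ha
  · exact Multiset.count_le_of_le b h

theorem monotone_sum_map {α : Type*} (f : α → ℕ) :
    Monotone fun s : Multiset α => (s.map f).sum := fun s t h => by
  obtain ⟨r, rfl⟩ := Multiset.le_iff_exists_add.1 h
  simp only [Multiset.map_add, Multiset.sum_add, Nat.le_add_right]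

/-- Firing vertices other than `v` never removes chips from `v`. -/
theorem Firable.mono_of_count_eq {v : V} (hf : Firable E (fireList E c l) v)
    (hl : ValidSeq E c l) (hl' : ValidSeq E c l') (hle : (l : Multiset V) ≤ l')
    (hcount : l.count v = l'.count v) : Firable E (fireList E c l') v := by
  have hsum : (l.map (E · v)).sum ≤ (l'.map (E · v)).sum := by
    simpa using monotone_sum_map (E · v) hle
  have hv := fireList_apply_add hl v
  have hv' := fireList_apply_add hl' v
  rw [hcount] at hv
  exact ⟨hf.1, hf.2.trans (by omega)⟩

theorem exists_firable_of_not_le (hl : ValidSeq E c l) (hl' : ValidSeq E c l')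
    (h : ¬ (l' : Multiset V) ≤ l) :
    ∃ u, Firable E (fireList E c l) u ∧ l.count u < l'.count u := by
  induction l' using List.reverseRecOn with
  | nil => exact absurd (Multiset.zero_le _) h
  | append_singleton p u ih =>
    obtain ⟨hp, hu, -⟩ := validSeq_append.1 hl'
    by_cases hpl : (p : Multiset V) ≤ l
    · have hcount : p.count u = l.count u := by
        simp only [← Multiset.coe_count]
        refine (Multiset.count_le_of_le u hpl).eq_of_not_lt fun hlt => h ?_
        exact coe_append_singleton p u ▸ cons_le_of_count_lt hpl hlt
      exact ⟨u, hu.mono_of_count_eq hp hl hpl hcount, by simp [hcount]⟩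
    · obtain ⟨w, hw, hlt⟩ := ih hp hpl
      exact ⟨w, hw, hlt.trans_le ((List.sublist_append_left p [u]).count_le w)⟩

theorem reaches_of_le (hl : ValidSeq E c l) (hl' : ValidSeq E c l')
    (h : (l : Multiset V) ≤ l') : Reaches E (fireList E c l) (fireList E c l') := by
  induction hn : l'.length - l.length generalizing l with
  | zero =>
    have hperm : (l : Multiset V) = l' :=
      Multiset.eq_of_le_of_card_le h (by simp only [Multiset.coe_card]; omega)
    exact ⟨[], trivial, fireList_eq_of_perm hl hl' (Multiset.coe_eq_coe.1 hperm)⟩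
  | succ n ih =>
    have hne : ¬ (l' : Multiset V) ≤ l := fun hge => by
      have := Multiset.card_le_card hge
      simp only [Multiset.coe_card] at this
      omega
    obtain ⟨u, hu, hlt⟩ := exists_firable_of_not_le hl hl' hne
    have hlu : ((l ++ [u] : List V) : Multiset V) ≤ l' := by
      rw [coe_append_singleton]
      exact cons_le_of_count_lt h (by simpa using hlt)
    obtain ⟨t, ht, ht'⟩ := ih (hl.concat hu) hlu
      (by simp only [List.length_append, List.length_singleton]; omega)
    rw [fireList_append] at ht ht'
    exact ⟨u :: t, ⟨hu, ht⟩, ht'⟩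

theorem le_of_fixedPt (hl : ValidSeq E c l) (hl' : ValidSeq E c l')
    (h : FixedPt E (fireList E c l)) : (l' : Multiset V) ≤ l := by
  by_contra hle
  obtain ⟨u, hu, -⟩ := exists_firable_of_not_le hl hl' hle
  exact h u hu

theorem ReachesUFP.perm_of_fireList_eq (hU : ReachesUFP E O) (hl : ValidSeq E O l)
    (hl' : ValidSeq E O l') (h : fireList E O l = fireList E O l') : l.Perm l' := by
  obtain ⟨fp, -, hfix, hreach⟩ := hU
  obtain ⟨t, ht, rfl⟩ := hreach _ ⟨l, hl, rfl⟩
  have hlt : ValidSeq E O (l ++ t) := validSeq_append.2 ⟨hl, ht⟩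
  have hlt' : ValidSeq E O (l' ++ t) := validSeq_append.2 ⟨hl', h ▸ ht⟩
  have hfix' : FixedPt E (fireList E O (l' ++ t)) := by rwa [fireList_append, ← h]
  rw [← fireList_append] at hfix
  have heq := le_antisymm (le_of_fixedPt hlt' hlt hfix') (le_of_fixedPt hlt hlt' hfix)
  exact (List.perm_append_right_iff t).1 (Multiset.coe_eq_coe.1 heq)

theorem ValidSeq.filter {c' : V → ℕ} {S : Set V} (hS : ∀ u v, 0 < E u v → v ∈ S → u ∈ S)
    (hc : Set.EqOn c c' S) (h : ValidSeq E c l) :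
    ValidSeq E c' (l.filter (· ∈ S)) ∧
      Set.EqOn (fireList E c l) (fireList E c' (l.filter (· ∈ S))) S := by
  induction l generalizing c c' with
  | nil => exact ⟨trivial, hc⟩
  | cons w l ih =>
    by_cases hw : w ∈ S
    · have hstep := ih (c := fire E c w) (c' := fire E c' w)
        (fun v hv => by simp only [fire, hc hv, hc hw]) h.2
      simp only [List.filter_cons, hw, decide_true, if_true, fireList]
      exact ⟨⟨⟨h.1.1, hc hw ▸ h.1.2⟩, hstep.1⟩, hstep.2⟩
    · have hcw : Set.EqOn (fire E c w) c' S := fun v hv => by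
        have hne : v ≠ w := fun hvw => hw (hvw ▸ hv)
        have hE : E w v = 0 := Nat.eq_zero_of_not_pos fun hpos => hw (hS w v hpos hv)
        simp [fire, hne, hE, hc hv]
      simpa [List.filter_cons, hw, fireList] using ih hcw h.2

theorem reaches_iff_reflTransGen {c c' : V → ℕ} :
    Reaches E c c' ↔ Relation.ReflTransGen (fun a b => ∃ v, FireStep E a v b) c c' := by
  constructor
  · rintro ⟨l, hl, rfl⟩
    induction l generalizing c with
    | nil => exact .refl
    | cons v l ih => exact .head ⟨v, hl.1, rfl⟩ (ih hl.2)
  · intro h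
    induction h using Relation.ReflTransGen.head_induction_on with
    | refl => exact ⟨[], trivial, rfl⟩
    | head h _ ih =>
      obtain ⟨v, hv, rfl⟩ := h
      obtain ⟨l, hl, hl'⟩ := ih
      exact ⟨v :: l, ⟨hv, hl⟩, hl'⟩

end FiringSequences

section CoverSteps

variable {V L : Type*} [PartialOrder L] [Finite L] {E : V → V → ℕ} {f : L → V → ℕ}

theorem reflTransGen_covBy_of_le {x y : L} (h : x ≤ y) : Relation.ReflTransGen (· ⋖ ·) x y := by
  have := Fintype.ofFinite L
  have := Fintype.toLocallyFiniteOrder (α := L)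
  exact le_iff_reflTransGen_covBy.1 h

theorem reaches_apply_iff
    (hf : ∀ x c, (∃ v, FireStep E (f x) v c) ↔ ∃ y, x ⋖ y ∧ f y = c) {x : L} {c : V → ℕ} :
    Reaches E (f x) c ↔ ∃ y, x ≤ y ∧ f y = c := by
  rw [reaches_iff_reflTransGen]
  constructor
  · intro h
    induction h with
    | refl => exact ⟨x, le_rfl, rfl⟩
    | tail _ hstep ih =>
      obtain ⟨y, hxy, rfl⟩ := ih
      obtain ⟨z, hyz, hz⟩ := (hf y _).1 hstep
      exact ⟨z, hxy.trans hyz.le, hz⟩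
  · rintro ⟨y, hxy, rfl⟩
    exact (reflTransGen_covBy_of_le hxy).lift f fun a b hab => (hf a _).2 ⟨b, hab, rfl⟩

theorem reachesUFP_of_fireStep_iff_covBy [BoundedOrder L]
    (hf : ∀ x c, (∃ v, FireStep E (f x) v c) ↔ ∃ y, x ⋖ y ∧ f y = c) :
    ReachesUFP E (f ⊥) := by
  refine ⟨f ⊤, (reaches_apply_iff hf).2 ⟨⊤, bot_le, rfl⟩, fun v hv => ?_, fun c hc => ?_⟩
  · obtain ⟨y, hy, -⟩ := (hf ⊤ _).1 ⟨v, hv, rfl⟩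
    exact not_top_lt hy.lt
  · obtain ⟨y, -, rfl⟩ := (reaches_apply_iff hf).1 hc
    exact (reaches_apply_iff hf).2 ⟨⊤, le_top, rfl⟩

theorem generates_of_fireStep_iff_covBy [OrderBot L] (hinj : Function.Injective f)
    (hf : ∀ x c, (∃ v, FireStep E (f x) v c) ↔ ∃ y, x ⋖ y ∧ f y = c) :
    Generates E (f ⊥) L := by
  have hbij : Function.Bijective fun x : L =>
      (⟨f x, (reaches_apply_iff hf).2 ⟨x, bot_le, rfl⟩⟩ : {c // Reaches E (f ⊥) c}) := by
    refine ⟨fun x y h => hinj (congrArg Subtype.val h), fun ⟨c, hc⟩ => ?_⟩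
    obtain ⟨y, -, rfl⟩ := (reaches_apply_iff hf).1 hc
    exact ⟨y, rfl⟩
  refine ⟨Equiv.ofBijective _ hbij, fun a b => ?_⟩
  rw [Equiv.ofBijective_apply, Equiv.ofBijective_apply, reaches_apply_iff hf]
  simp only [hinj.eq_iff, exists_eq_right]

end CoverSteps

section MeetIrreducibles

variable {L : Type*} [Lattice L]

theorem exists_meetIrred_of_not_le [Finite L] {x y : L} (h : ¬ y ≤ x) :
    ∃ m, MeetIrred m ∧ x ≤ m ∧ ¬ y ≤ m := by
  obtain ⟨m, hxm, hm⟩ := (Set.toFinite {z : L | ¬ y ≤ z}).exists_le_maximal h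
  have hsup : ∀ z, m < z → m ⊔ y ≤ z := fun z hz =>
    sup_le hz.le (not_not.1 fun hyz => hz.not_ge (hm.2 hyz hz.le))
  have hlt : m < m ⊔ y := left_lt_sup.2 hm.1
  refine ⟨m, ⟨m ⊔ y, ⟨hlt, fun z hmz hzy => hzy.not_ge (hsup z hmz)⟩, fun z hz => ?_⟩, hxm, hm.1⟩
  exact ((hz.eq_or_eq hlt.le (hsup z hz.lt)).resolve_left hlt.ne').symm

/-- `m` labels some cover of `x`, that is, `m = 𝔪(x, y)` for some `y` covering `x`. The set `𝔘_m`
consists of the minimal such `x`. -/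
def LabelsCover (m x : L) : Prop := ∃ y, x ⋖ y ∧ MsetDiff x y = {m}

variable {P : Type*} {g : P ≃ {m : L // MeetIrred m}} {x y : L} {p : P}

theorem le_apply_of_msetDiff_eq (h : MsetDiff x y = {(g p : L)}) : x ≤ g p :=
  (h.ge rfl).2.1

theorem exists_index_of_labelsCover {m : L} (g : P ≃ {m : L // MeetIrred m})
    (h : LabelsCover m x) : ∃ p, (g p : L) = m := by
  obtain ⟨y, -, hd⟩ := h
  exact ⟨g.symm ⟨m, (hd.ge rfl).1⟩, by simp⟩

variable [Fintype P]

/-- The set `M \ M_x` of meet-irreducibles not above `x`, as a finset of indices with respect to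
an enumeration `g` of the meet-irreducibles. -/
noncomputable def notAbove (g : P ≃ {m : L // MeetIrred m}) (x : L) : Finset P :=
  Finset.univ.filter fun p => ¬ x ≤ g p

theorem mem_notAbove : p ∈ notAbove g x ↔ ¬ x ≤ g p := by simp [notAbove]

theorem notAbove_mono : Monotone (notAbove g) := fun _ _ h _ hp =>
  mem_notAbove.2 fun hy => mem_notAbove.1 hp (h.trans hy)

theorem notAbove_bot [OrderBot L] : notAbove g (⊥ : L) = ∅ := by simp [notAbove]

theorem notAbove_injective [Finite L] : Function.Injective (notAbove g) := by
  have hle : ∀ {x y : L}, notAbove g x = notAbove g y → y ≤ x := fun {x y} h => by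
    by_contra hyx
    obtain ⟨m, hm, hxm, hym⟩ := exists_meetIrred_of_not_le hyx
    have hmem : g.symm ⟨m, hm⟩ ∈ notAbove g y := mem_notAbove.2 (by simpa using hym)
    rw [← h, mem_notAbove, g.apply_symm_apply] at hmem
    exact hmem hxm
  exact fun x y h => le_antisymm (hle h.symm) (hle h)

theorem notAbove_eq_insert (hxy : x ≤ y) (h : MsetDiff x y = {(g p : L)}) :
    notAbove g y = insert p (notAbove g x) := by
  ext q
  have hq : (x ≤ g q ∧ ¬ y ≤ g q) ↔ q = p := by
    rw [← g.injective.eq_iff, ← Subtype.val_inj, ← Set.mem_singleton_iff, ← h]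
    exact (and_iff_right (g q).2).symm
  have hle : y ≤ g q → x ≤ g q := hxy.trans
  rw [Finset.mem_insert, mem_notAbove, mem_notAbove, ← hq]
  tauto

end MeetIrreducibles

/-- The elements of a partial order `L` realised by valid firing sequences of the game on `E`
started at `O`, in such a way that every valid firing sequence realises an element and that the
order of `L` is the inclusion of the multisets of fired vertices (the shot vectors). -/
structure FiringModel {V : Type*} (E : V → V → ℕ) (O : V → ℕ) (L : Type*) [PartialOrder L] where
  /-- A firing sequence from `O` leading to the configuration of a given element. -/
  seq : L → List V
  validSeq_seq : ∀ x, ValidSeq E O (seq x)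
  seq_le_seq_iff : ∀ {x y}, (seq x : Multiset V) ≤ seq y ↔ x ≤ y
  exists_seq_perm : ∀ {l}, ValidSeq E O l → ∃ x, (seq x).Perm l

theorem Generates.nonempty_firingModel {V L : Type*} [PartialOrder L] {E : V → V → ℕ}
    {O : V → ℕ} (hG : Generates E O L) (hU : ReachesUFP E O) : Nonempty (FiringModel E O L) := by
  obtain ⟨f, hf⟩ := hG
  choose seq hseq hconf using fun x => (f x).2
  refine ⟨seq, hseq, fun {x y} => ?_, fun {l} hl => ?_⟩
  · rw [hf, ← hconf x, ← hconf y]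
    refine ⟨reaches_of_le (hseq x) (hseq y), fun ⟨t, ht, hty⟩ => ?_⟩
    have hperm := hU.perm_of_fireList_eq (validSeq_append.2 ⟨hseq x, ht⟩) (hseq y)
      (by rw [fireList_append, hty])
    exact (List.sublist_append_left (seq x) t).subperm.trans hperm.subperm
  · refine ⟨f.symm ⟨_, l, hl, rfl⟩, hU.perm_of_fireList_eq (hseq _) hl ?_⟩
    rw [hconf, Equiv.apply_symm_apply]

namespace FiringModel

section PartialOrder

variable {V L : Type*} [PartialOrder L] {E : V → V → ℕ} {O : V → ℕ} (M : FiringModel E O L)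
  {x y : L} {v : V}

/-- The shot vector of an element: the multiset of vertices fired to reach its configuration. -/
def shots : L ↪o Multiset V :=
  OrderEmbedding.ofMapLEIff (fun x => (M.seq x : Multiset V)) fun _ _ => M.seq_le_seq_iff

/-- The configuration reached by the firing sequence of an element. -/
noncomputable def conf (x : L) : V → ℕ := fireList E O (M.seq x)

theorem count_shots_mono (v : V) : Monotone fun x => (M.shots x).count v := fun _ _ h =>
  Multiset.count_le_of_le v (M.shots.monotone h)

theorem exists_shots_eq {l : List V} (hl : ValidSeq E O l) :
    ∃ x, M.shots x = l ∧ M.conf x = fireList E O l := by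
  obtain ⟨x, hx⟩ := M.exists_seq_perm hl
  exact ⟨x, Multiset.coe_eq_coe.2 hx, fireList_eq_of_perm (M.validSeq_seq x) hl hx⟩

theorem conf_add_count (x : L) (v : V) :
    M.conf x v + (M.shots x).count v * outDeg E v = O v + ((M.shots x).map (E · v)).sum := by
  simpa [shots, conf] using fireList_apply_add (M.validSeq_seq x) v

theorem exists_firable_of_not_le (h : ¬ y ≤ x) :
    ∃ v, Firable E (M.conf x) v ∧ (M.shots x).count v < (M.shots y).count v := by
  simpa [shots, conf] using
    _root_.exists_firable_of_not_le (M.validSeq_seq x) (M.validSeq_seq y) (mt M.seq_le_seq_iff.1 h)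

theorem covBy_of_shots_eq_cons (h : M.shots y = v ::ₘ M.shots x) : x ⋖ y :=
  CovBy.of_image M.shots (h ▸ Multiset.covBy_cons _ v)

theorem exists_shots_eq_cons (h : Firable E (M.conf x) v) : ∃ y, M.shots y = v ::ₘ M.shots x := by
  obtain ⟨y, hy, -⟩ := M.exists_shots_eq ((M.validSeq_seq x).concat h)
  exact ⟨y, hy.trans (coe_append_singleton _ v)⟩

theorem exists_firable_of_covBy (h : x ⋖ y) :
    ∃ v, Firable E (M.conf x) v ∧ M.shots y = v ::ₘ M.shots x := by
  obtain ⟨v, hv, hlt⟩ := M.exists_firable_of_not_le h.lt.not_ge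
  obtain ⟨z, hz⟩ := M.exists_shots_eq_cons hv
  have hxz := M.covBy_of_shots_eq_cons hz
  have hzy : z ≤ y :=
    M.shots.le_iff_le.1 (hz ▸ cons_le_of_count_lt (M.shots.monotone h.le) hlt)
  obtain rfl := (h.eq_or_eq hxz.le hzy).resolve_left hxz.ne'
  exact ⟨v, hv, hz⟩

theorem shots_bot [OrderBot L] : M.shots ⊥ = 0 := by
  obtain ⟨x, hx, -⟩ := M.exists_shots_eq (l := []) trivial
  have hle : M.shots ⊥ ≤ M.shots x := M.shots.monotone bot_le
  rwa [hx, Multiset.coe_nil, nonpos_iff_eq_zero] at hle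

end PartialOrder

section Labels

variable {V L : Type*} [Lattice L] {E : V → V → ℕ} {O : V → ℕ} {x y m n : L} {v : V}

theorem existsUnique_firable (M : FiringModel E O L) (hm : MeetIrred m) :
    ∃! v, Firable E (M.conf m) v := by
  obtain ⟨y, hy, hunique⟩ := hm
  obtain ⟨v, hv, hvy⟩ := M.exists_firable_of_covBy hy
  refine ⟨v, hv, fun u hu => ?_⟩
  obtain ⟨z, hz⟩ := M.exists_shots_eq_cons hu
  obtain rfl := hunique z (M.covBy_of_shots_eq_cons hz)
  exact (Multiset.cons_inj_left _).1 (hz.symm.trans hvy)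

/-- The only vertex that can be fired at a meet-irreducible. -/
noncomputable def label (M : FiringModel E O L) (hm : MeetIrred m) : V :=
  (M.existsUnique_firable hm).choose

theorem firable_label (M : FiringModel E O L) (hm : MeetIrred m) :
    Firable E (M.conf m) (M.label hm) :=
  (M.existsUnique_firable hm).choose_spec.1

theorem le_iff_count_label_le (M : FiringModel E O L) (hm : MeetIrred m) :
    x ≤ m ↔ (M.shots x).count (M.label hm) ≤ (M.shots m).count (M.label hm) := by
  refine ⟨fun h => M.count_shots_mono _ h, fun h => ?_⟩
  by_contra hx
  obtain ⟨u, hu, hlt⟩ := M.exists_firable_of_not_le hx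
  obtain rfl := (M.existsUnique_firable hm).unique hu (M.firable_label hm)
  exact hlt.not_ge h

theorem eq_of_label_eq (M : FiringModel E O L) (hm : MeetIrred m) (hn : MeetIrred n)
    (hlabel : M.label hm = M.label hn)
    (hcount : (M.shots m).count (M.label hm) = (M.shots n).count (M.label hm)) : m = n :=
  le_antisymm ((M.le_iff_count_label_le hn).2 (hlabel ▸ hcount.le))
    ((M.le_iff_count_label_le hm).2 hcount.ge)

theorem mem_msetDiff_iff (M : FiringModel E O L) (hy : M.shots y = v ::ₘ M.shots x)
    (hm : MeetIrred m) :
    m ∈ MsetDiff x y ↔ M.label hm = v ∧ (M.shots x).count v = (M.shots m).count v := by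
  rw [MsetDiff, Set.mem_ofPred, and_iff_right hm, M.le_iff_count_label_le hm,
    M.le_iff_count_label_le hm, hy, Multiset.count_cons]
  split_ifs with hv
  · simp only [hv, true_and]
    omega
  · simp only [hv, false_and, iff_false]
    omega

theorem msetDiff_eq_singleton (M : FiringModel E O L) (hxy : x ⋖ y) (hm : m ∈ MsetDiff x y) :
    MsetDiff x y = {m} := by
  obtain ⟨v, -, hy⟩ := M.exists_firable_of_covBy hxy
  obtain ⟨rfl, hmx⟩ := (M.mem_msetDiff_iff hy hm.1).1 hm
  refine Set.eq_singleton_iff_unique_mem.2 ⟨hm, fun n hn => ?_⟩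
  obtain ⟨hlabel, hnx⟩ := (M.mem_msetDiff_iff hy hn.1).1 hn
  exact (M.eq_of_label_eq hm.1 hn.1 hlabel.symm (hmx.symm.trans hnx)).symm

theorem exists_msetDiff_eq_singleton [Finite L] (M : FiringModel E O L) (hxy : x ⋖ y) :
    ∃ m, MsetDiff x y = {m} := by
  obtain ⟨m, hm⟩ := exists_meetIrred_of_not_le hxy.lt.not_ge
  exact ⟨m, M.msetDiff_eq_singleton hxy hm⟩

theorem labelsCover_iff (M : FiringModel E O L) (hm : MeetIrred m) :
    LabelsCover m x ↔ Firable E (M.conf x) (M.label hm) ∧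
      (M.shots x).count (M.label hm) = (M.shots m).count (M.label hm) := by
  constructor
  · rintro ⟨y, hxy, hd⟩
    obtain ⟨v, hv, hy⟩ := M.exists_firable_of_covBy hxy
    obtain ⟨rfl, hcount⟩ := (M.mem_msetDiff_iff hy hm).1 (hd ▸ rfl)
    exact ⟨hv, hcount⟩
  · rintro ⟨hx, hcount⟩
    obtain ⟨y, hy⟩ := M.exists_shots_eq_cons hx
    have hxy := M.covBy_of_shots_eq_cons hy
    exact ⟨y, hxy, M.msetDiff_eq_singleton hxy ((M.mem_msetDiff_iff hy hm).2 ⟨rfl, hcount⟩)⟩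

end Labels

section Acyclic

variable {V L : Type*} [Lattice L] {E : V → V → ℕ} {O : V → ℕ} {a m n : L}

/-- Firing only the ancestors of `M.label hm`, as often as on the way to `a`, still makes
`M.label hm` firable; minimality of `a` then leaves no room for other firings. -/
theorem reflTransGen_label_of_mem_shots (M : FiringModel E O L) (ha : a ∈ Uset m) (hm : MeetIrred m)
    {u : V} (hu : u ∈ M.shots a) :
    Relation.ReflTransGen (fun v w => 0 < E v w) u (M.label hm) := by
  let S : Set V := {u | Relation.ReflTransGen (fun v w => 0 < E v w) u (M.label hm)}
  have hlabel : M.label hm ∈ S := .refl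
  obtain ⟨hvalid, hconf⟩ := (M.validSeq_seq a).filter (S := S) (fun _ _ h h' => h'.head h)
    (Set.eqOn_refl O S)
  obtain ⟨b, hb, hcb⟩ := M.exists_shots_eq hvalid
  have hba : b ≤ a := M.shots.le_iff_le.1 (hb ▸ List.filter_sublist.subperm)
  obtain ⟨hfa, hcount⟩ := (M.labelsCover_iff hm).1 ha.1
  have hlb : LabelsCover m b := by
    refine (M.labelsCover_iff hm).2 ⟨⟨hfa.1, ?_⟩, ?_⟩
    · rw [hcb, ← hconf hlabel]
      exact hfa.2
    · rw [← hcount, hb, Multiset.coe_count, List.count_filter (by simpa using hlabel)]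
      exact (Multiset.coe_count _ _).symm
  obtain rfl := hba.antisymm (ha.2 hlb hba)
  rw [hb, Multiset.mem_coe, List.mem_filter] at hu
  exact of_decide_eq_true hu.2

theorem lex_of_gedge (M : FiringModel E O L) (h : Gedge m n) :
    Prod.Lex (Relation.TransGen fun v w => 0 < E v w) (· < ·)
      (M.label h.1, (M.shots m).count (M.label h.1))
      (M.label h.2.1, (M.shots n).count (M.label h.2.1)) := by
  obtain ⟨hm, hn, a, ha, -, ham⟩ := h
  have hlt := not_le.1 (mt (M.le_iff_count_label_le hm).2 ham)
  have hmem : M.label hm ∈ M.shots a := Multiset.count_pos.1 (Nat.zero_le _ |>.trans_lt hlt)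
  rcases Relation.reflTransGen_iff_eq_or_transGen.1
    (M.reflTransGen_label_of_mem_shots ha hn hmem) with heq | htrans
  · refine Prod.lex_iff.2 (.inr ⟨heq.symm, ?_⟩)
    have hcount := ((M.labelsCover_iff hn).1 ha.1).2
    rw [← hcount]
    exact heq ▸ hlt
  · exact .left _ _ htrans

theorem gAcyclic (M : FiringModel E O L) (hE : AcyclicG E) : GAcyclic L := by
  have : Std.Irrefl (Relation.TransGen fun v w : V => 0 < E v w) := ⟨hE⟩
  have hlex : ∀ {m n : L}, Relation.TransGen Gedge m n → ∃ (hm : MeetIrred m) (hn : MeetIrred n),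
      Prod.Lex (Relation.TransGen fun v w => 0 < E v w) (· < ·)
        (M.label hm, (M.shots m).count (M.label hm))
        (M.label hn, (M.shots n).count (M.label hn)) := fun {m n} h => by
    induction h with
    | single h => exact ⟨h.1, h.2.1, M.lex_of_gedge h⟩
    | tail _ h ih => exact ⟨ih.1, h.2.1, _root_.trans ih.2.2 (M.lex_of_gedge h)⟩
  intro m h
  obtain ⟨_, _, hmm⟩ := hlex h
  exact irrefl _ hmm

end Acyclic

end FiringModel

section ThresholdSystems

variable {L : Type*} [Lattice L] {P : Type*} [Fintype P] {g : P ≃ {m : L // MeetIrred m}}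
  {w : P → ℕ} {e : P → P → ℕ}

/-- A simultaneous solution of the systems `E(m)`: along the elements `x` below the meet-irreducible
of index `p`, that meet-irreducible labels a cover of `x` exactly when the weights `e q p` of the
meet-irreducibles already used sum up to the threshold `w p`. -/
def IsThresholdSystem (g : P ≃ {m : L // MeetIrred m}) (w : P → ℕ) (e : P → P → ℕ) : Prop :=
  ∀ p, ∀ x ≤ (g p : L), (w p ≤ ∑ q ∈ notAbove g x, e q p ↔ LabelsCover (g p : L) x)

theorem IsThresholdSystem.restrict_gedge [Finite L] (h : IsThresholdSystem g w e) :
    IsThresholdSystem g w fun q p => if Gedge (g q : L) (g p) then e q p else 0 := by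
  intro p x hx
  rw [← h p x hx]
  have hres (q : P) : (if Gedge (g q : L) (g p) then e q p else 0) ≤ e q p := by
    split_ifs <;> omega
  refine ⟨fun hle => hle.trans (Finset.sum_le_sum fun q _ => hres q), fun hle => ?_⟩
  obtain ⟨a, hax, ha⟩ :=
    (Set.toFinite {z | LabelsCover (g p : L) z}).exists_le_minimal ((h p x hx).1 hle)
  have hedge : ∀ q ∈ notAbove g a, Gedge (g q : L) (g p) := fun q hq =>
    ⟨(g q).2, (g p).2, a, ha, (g q).2, mem_notAbove.1 hq⟩
  calc w p ≤ ∑ q ∈ notAbove g a, e q p := (h p a (hax.trans hx)).2 ha.1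
    _ = ∑ q ∈ notAbove g a, if Gedge (g q : L) (g p) then e q p else 0 :=
      Finset.sum_congr rfl fun q hq => (if_pos (hedge q hq)).symm
    _ ≤ _ := Finset.sum_le_sum_of_subset (notAbove_mono hax)

/-- `c + k * d = o + s` is the chip balance of a vertex of out-degree `d` that has fired `k` times,
has received `s` chips and now holds `c`. -/
theorem threshold_le_iff {c d i k o s K : ℕ} (h : c + k * d = o + s) (hk : k ≤ i)
    (hK : o + s < K) : d * (i + 1) + i * K - o ≤ s + k * K ↔ d ≤ c ∧ k = i := by
  rw [tsub_le_iff_right, mul_add, mul_one, mul_comm d]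
  rcases hk.eq_or_lt with rfl | hlt
  · rw [and_iff_left rfl]
    omega
  · have hmul : k * K + K ≤ i * K := by
      rw [← Nat.succ_mul]
      exact Nat.mul_le_mul_right K hlt
    exact ⟨fun hle => by omega, fun hki => absurd hki.2 hlt.ne⟩

namespace FiringModel

variable {V : Type*} {E : V → V → ℕ} {O : V → ℕ}

theorem shots_eq_map_label [Finite L] [OrderBot L] (M : FiringModel E O L)
    (g : P ≃ {m : L // MeetIrred m}) (x : L) :
    M.shots x = (notAbove g x).val.map fun p => M.label (g p).2 := by
  induction reflTransGen_covBy_of_le (bot_le : ⊥ ≤ x) with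
  | refl => rw [M.shots_bot, notAbove_bot, Finset.empty_val, Multiset.map_zero]
  | @tail x y _ hxy ih =>
    obtain ⟨v, hv, hy⟩ := M.exists_firable_of_covBy hxy
    obtain ⟨m, hd⟩ := M.exists_msetDiff_eq_singleton hxy
    obtain ⟨p, rfl⟩ := exists_index_of_labelsCover g ⟨y, hxy, hd⟩
    obtain ⟨rfl, -⟩ := (M.mem_msetDiff_iff hy (g p).2).1 (hd.ge rfl)
    have hp : p ∉ notAbove g x := fun hp => mem_notAbove.1 hp (le_apply_of_msetDiff_eq hd)
    rw [notAbove_eq_insert hxy.le hd, Finset.insert_val_of_notMem hp, Multiset.map_cons, ← ih, hy]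

theorem sum_notAbove_label [Finite L] [OrderBot L] (M : FiringModel E O L)
    (g : P ≃ {m : L // MeetIrred m}) (x : L) (h : V → ℕ) :
    ∑ p ∈ notAbove g x, h (M.label (g p).2) = ((M.shots x).map h).sum := by
  rw [M.shots_eq_map_label g x, Multiset.map_map]
  rfl

/-- The weights are the edges into the vertex `v` labelling `p`, plus a bonus `K` for every earlier
firing of `v`. As `K` exceeds all other contributions, the threshold can be met only once `v` has
fired as often as at the meet-irreducible itself. -/
theorem exists_isThresholdSystem [Finite L] [BoundedOrder L] (M : FiringModel E O L)
    (g : P ≃ {m : L // MeetIrred m}) : ∃ w e, IsThresholdSystem g w e := by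
  let label (p : P) : V := M.label (g p).2
  let i (p : P) : ℕ := (M.shots (g p)).count (label p)
  let S (v : V) (x : L) : ℕ := ((M.shots x).map (E · v)).sum
  let K (v : V) : ℕ := O v + S v ⊤ + 1
  refine ⟨fun p => outDeg E (label p) * (i p + 1) + i p * K (label p) - O (label p),
    fun q p => E (label q) (label p) + if label q = label p then K (label p) else 0,
    fun p x hx => ?_⟩
  have hbonus : ((M.shots x).map fun u => if u = label p then K (label p) else 0).sum =
      (M.shots x).count (label p) * K (label p) := by
    rw [Multiset.sum_map_eq_nsmul_single (label p) fun _ hu _ => if_neg hu, if_pos rfl, smul_eq_mul]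
  have hsum : ∑ q ∈ notAbove g x, (E (label q) (label p) +
      if label q = label p then K (label p) else 0) =
      S (label p) x + (M.shots x).count (label p) * K (label p) := by
    rw [M.sum_notAbove_label g x fun u => E u (label p) + if u = label p then K (label p) else 0,
      Multiset.sum_map_add, hbonus]
  have hS : S (label p) x ≤ S (label p) ⊤ := monotone_sum_map _ (M.shots.monotone le_top)
  rw [hsum, threshold_le_iff (M.conf_add_count x _) (M.count_shots_mono _ hx)
    (show _ < K (label p) by simp only [K, S] at hS ⊢; omega),
    M.labelsCover_iff (g p).2]
  exact and_congr_left' (and_iff_right (M.firable_label (g p).2).1).symm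

end FiringModel

end ThresholdSystems

section ThresholdGame

variable {P : Type*} [Fintype P] {w : P → ℕ} {e : P → P → ℕ} {F : Finset P} {p : P}

/-- The number of chips each vertex of the threshold game loses to the sink. It is so large that
every vertex fires at most once. -/
noncomputable def drain (w : P → ℕ) (e : P → P → ℕ) : ℕ := 1 + ∑ p, w p + ∑ p, ∑ q, e p q

/-- The edges of the threshold game: `e` between vertices of `P`, and `drain w e` edges from each
of them to an additional sink `none`. -/
noncomputable def thresholdEdge (w : P → ℕ) (e : P → P → ℕ) : Option P → Option P → ℕ
  | some p, some q => e p q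
  | some _, none => drain w e
  | none, _ => 0

theorem outDeg_thresholdEdge_some (p : P) :
    outDeg (thresholdEdge w e) (some p) = drain w e + ∑ q, e p q := by
  rw [outDeg, finsum_eq_sum_of_fintype, Fintype.sum_option]
  rfl

theorem isSink_thresholdEdge_none : IsSink (thresholdEdge w e) none := by
  rw [IsSink, outDeg, finsum_eq_sum_of_fintype]
  simp [thresholdEdge]

theorem not_isSink_thresholdEdge_some (p : P) : ¬ IsSink (thresholdEdge w e) (some p) := by
  have hloop : e p p ≤ ∑ q, e p q :=
    Finset.single_le_sum (fun _ _ => Nat.zero_le _) (Finset.mem_univ p)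
  rw [IsSink, outDeg_thresholdEdge_some, drain]
  simp only [thresholdEdge]
  omega

theorem le_outDeg_thresholdEdge (p : P) : w p ≤ outDeg (thresholdEdge w e) (some p) := by
  have hw : w p ≤ ∑ q, w q := Finset.single_le_sum (fun _ _ => Nat.zero_le _) (Finset.mem_univ p)
  rw [outDeg_thresholdEdge_some, drain]
  omega

theorem sum_lt_outDeg_thresholdEdge (F : Finset P) (p : P) :
    ∑ q ∈ F, e q p < outDeg (thresholdEdge w e) (some p) := by
  have hsum : ∑ q ∈ F, e q p ≤ ∑ q, ∑ r, e q r :=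
    (Finset.sum_le_univ_sum_of_nonneg fun _ => Nat.zero_le _).trans <|
      Finset.sum_le_sum fun q _ =>
        Finset.single_le_sum (f := e q) (fun _ _ => Nat.zero_le _) (Finset.mem_univ p)
  rw [outDeg_thresholdEdge_some, drain]
  omega

/-- The configuration of the threshold game after each vertex in `F` has fired once. Neither
subtraction truncates as long as all vertices in `F` have met their thresholds (`IsMet`). -/
noncomputable def thresholdConf (w : P → ℕ) (e : P → P → ℕ) (F : Finset P) : Option P → ℕ
  | some p => outDeg (thresholdEdge w e) (some p) - w p + ∑ q ∈ F, e q p -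
      if p ∈ F then outDeg (thresholdEdge w e) (some p) else 0
  | none => F.card * drain w e

/-- Every vertex in `F` has met its threshold once all vertices in `F` have fired. -/
def IsMet (w : P → ℕ) (e : P → P → ℕ) (F : Finset P) : Prop :=
  ∀ p ∈ F, w p ≤ ∑ q ∈ F, e q p

theorem IsMet.mem_iff_thresholdConf_lt (hF : IsMet w e F) :
    p ∈ F ↔ thresholdConf w e F (some p) < outDeg (thresholdEdge w e) (some p) - w p := by
  have hsum := sum_lt_outDeg_thresholdEdge (w := w) (e := e) F p
  have hw := le_outDeg_thresholdEdge (w := w) (e := e) p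
  by_cases hp : p ∈ F
  · have hle := hF p hp
    simp only [thresholdConf, hp, if_true, true_iff]
    omega
  · simp only [thresholdConf, hp, if_false, false_iff]
    omega

theorem IsMet.eq_of_thresholdConf_eq {F' : Finset P} (hF : IsMet w e F) (hF' : IsMet w e F')
    (h : thresholdConf w e F = thresholdConf w e F') : F = F' := by
  ext p
  rw [hF.mem_iff_thresholdConf_lt, hF'.mem_iff_thresholdConf_lt, h]

theorem firable_thresholdConf :
    Firable (thresholdEdge w e) (thresholdConf w e F) (some p) ↔
      p ∉ F ∧ w p ≤ ∑ q ∈ F, e q p := by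
  have hsum := sum_lt_outDeg_thresholdEdge (w := w) (e := e) F p
  have hw := le_outDeg_thresholdEdge (w := w) (e := e) p
  rw [Firable, and_iff_right (not_isSink_thresholdEdge_some p)]
  by_cases hp : p ∈ F
  · simp only [thresholdConf, hp, if_true, not_true, false_and, iff_false]
    omega
  · simp only [thresholdConf, hp, if_false, not_false_eq_true, true_and]
    omega

theorem IsMet.fire_thresholdConf (hF : IsMet w e F)
    (hp : Firable (thresholdEdge w e) (thresholdConf w e F) (some p)) :
    fire (thresholdEdge w e) (thresholdConf w e F) (some p) = thresholdConf w e (insert p F) := by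
  obtain ⟨hpF, hle⟩ := firable_thresholdConf.1 hp
  funext u
  cases u with
  | none => simp [fire, thresholdConf, thresholdEdge, Finset.card_insert_of_notMem hpF, add_mul]
  | some q =>
    have hw := le_outDeg_thresholdEdge (w := w) (e := e) q
    simp only [fire, Option.some.injEq, thresholdConf, thresholdEdge, Finset.sum_insert hpF,
      Finset.mem_insert]
    by_cases hqp : q = p
    · subst hqp
      simp only [hpF, if_true, if_false, true_or]
      omega
    · by_cases hq : q ∈ F
      · have hqF := hF q hq
        simp only [hqp, hq, if_true, if_false, false_or]
        omega
      · simp only [hqp, hq, if_false, false_or]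
        omega

theorem acyclicG_thresholdEdge (he : AcyclicG e) : AcyclicG (thresholdEdge w e) := by
  have hsource : ∀ {a b}, 0 < thresholdEdge w e a b → ∃ p, a = some p := fun {a b} h => by
    cases a with
    | none => exact absurd h (lt_irrefl 0)
    | some p => exact ⟨p, rfl⟩
  have hlift : ∀ {a q}, Relation.TransGen (fun a b => 0 < thresholdEdge w e a b) a (some q) →
      ∃ p, a = some p ∧ Relation.TransGen (fun p q => 0 < e p q) p q := fun {a q} h => by
    induction h using Relation.TransGen.head_induction_on with
    | single h =>
      obtain ⟨p, rfl⟩ := hsource h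
      exact ⟨p, rfl, .single h⟩
    | head h _ ih =>
      obtain ⟨p, rfl⟩ := hsource h
      obtain ⟨p', rfl, hp'⟩ := ih
      exact ⟨p, rfl, .head h hp'⟩
  intro a h
  obtain ⟨b, hab, -⟩ := Relation.TransGen.head'_iff.1 h
  obtain ⟨p, rfl⟩ := hsource hab
  obtain ⟨q, hq, hcycle⟩ := hlift h
  obtain rfl := Option.some.inj hq
  exact he p hcycle

end ThresholdGame

namespace IsThresholdSystem

variable {L : Type*} [Lattice L] [Finite L] {P : Type*} [Fintype P]
  {g : P ≃ {m : L // MeetIrred m}} {w : P → ℕ} {e : P → P → ℕ}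

theorem isMet_notAbove [OrderBot L] (h : IsThresholdSystem g w e)
    (hcov : ∀ x y : L, x ⋖ y → ∃ m, MsetDiff x y = {m}) (x : L) : IsMet w e (notAbove g x) := by
  induction reflTransGen_covBy_of_le (bot_le : ⊥ ≤ x) with
  | refl => simp [IsMet, notAbove_bot]
  | @tail x y _ hxy ih =>
    obtain ⟨m, hd⟩ := hcov x y hxy
    obtain ⟨p, rfl⟩ := exists_index_of_labelsCover g ⟨y, hxy, hd⟩
    intro q hq
    refine le_trans ?_ (Finset.sum_le_sum_of_subset (notAbove_mono hxy.le))
    rw [notAbove_eq_insert hxy.le hd, Finset.mem_insert] at hq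
    rcases hq with rfl | hq
    · exact (h q x (le_apply_of_msetDiff_eq hd)).2 ⟨y, hxy, hd⟩
    · exact ih q hq

theorem fireStep_iff_covBy [OrderBot L] (h : IsThresholdSystem g w e)
    (hcov : ∀ x y : L, x ⋖ y → ∃ m, MsetDiff x y = {m}) (x : L) (c : Option P → ℕ) :
    (∃ v, FireStep (thresholdEdge w e) (thresholdConf w e (notAbove g x)) v c) ↔
      ∃ y, x ⋖ y ∧ thresholdConf w e (notAbove g y) = c := by
  have hmet := h.isMet_notAbove hcov x
  constructor
  · rintro ⟨_ | p, hv, rfl⟩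
    · exact absurd isSink_thresholdEdge_none hv.1
    · obtain ⟨hp, hle⟩ := firable_thresholdConf.1 hv
      obtain ⟨y, hxy, hd⟩ := (h p x (not_not.1 (mt mem_notAbove.2 hp))).1 hle
      exact ⟨y, hxy, by rw [hmet.fire_thresholdConf hv, notAbove_eq_insert hxy.le hd]⟩
  · rintro ⟨y, hxy, rfl⟩
    obtain ⟨m, hd⟩ := hcov x y hxy
    obtain ⟨p, rfl⟩ := exists_index_of_labelsCover g ⟨y, hxy, hd⟩
    have hxp := le_apply_of_msetDiff_eq hd
    have hv := firable_thresholdConf.2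
      ⟨fun hp => mem_notAbove.1 hp hxp, (h p x hxp).2 ⟨y, hxy, hd⟩⟩
    exact ⟨some p, hv, by rw [hmet.fire_thresholdConf hv, notAbove_eq_insert hxy.le hd]⟩

theorem reachesUFP_and_generates [BoundedOrder L] (h : IsThresholdSystem g w e)
    (hcov : ∀ x y : L, x ⋖ y → ∃ m, MsetDiff x y = {m}) :
    ReachesUFP (thresholdEdge w e) (thresholdConf w e ∅) ∧
      Generates (thresholdEdge w e) (thresholdConf w e ∅) L := by
  have hinj : Function.Injective fun x : L => thresholdConf w e (notAbove g x) := fun x y hxy =>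
    notAbove_injective ((h.isMet_notAbove hcov x).eq_of_thresholdConf_eq
      (h.isMet_notAbove hcov y) hxy)
  rw [← notAbove_bot (g := g)]
  exact ⟨reachesUFP_of_fireStep_iff_covBy (h.fireStep_iff_covBy hcov),
    generates_of_fireStep_iff_covBy hinj (h.fireStep_iff_covBy hcov)⟩

end IsThresholdSystem

theorem FiringModel.exists_acyclicG_generates {V L : Type*} [Lattice L] [Finite L]
    [BoundedOrder L] {E : V → V → ℕ} {O : V → ℕ} (M : FiringModel E O L) (hL : GAcyclic L) :
    ∃ (W : Type) (_ : Finite W) (E' : W → W → ℕ) (O' : W → ℕ),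
      AcyclicG E' ∧ ReachesUFP E' O' ∧ Generates E' O' L := by
  let g := (Finite.equivFin {m : L // MeetIrred m}).symm
  obtain ⟨w, e, h⟩ := M.exists_isThresholdSystem g
  have hacyclic : AcyclicG fun q p => if Gedge (g q : L) (g p) then e q p else 0 :=
    fun p hp => hL (g p) (hp.lift (fun q => (g q : L)) fun _ _ hpos =>
      of_not_not fun hedge => hpos.ne' (if_neg hedge))
  exact ⟨_, inferInstance, _, _, acyclicG_thresholdEdge hacyclic,
    h.restrict_gedge.reachesUFP_and_generates fun _ _ => M.exists_msetDiff_eq_singleton⟩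

theorem stmt16_general {L : Type*} [Lattice L] [Finite L] [BoundedOrder L]
    (hL : ∃ (V : Type*) (E : V → V → ℕ) (O : V → ℕ),
      (∀ v, (Function.support (E v)).Finite) ∧ ReachesUFP E O ∧ Generates E O L) :
    (∃ (V : Type) (_ : Finite V) (E : V → V → ℕ) (O : V → ℕ),
      AcyclicG E ∧ ReachesUFP E O ∧ Generates E O L) ↔ GAcyclic L := by
  constructor
  · rintro ⟨V, _, E, O, hE, hU, hG⟩
    obtain ⟨M⟩ := hG.nonempty_firingModel hU
    exact M.gAcyclic hE
  · obtain ⟨V, E, O, -, hU, hG⟩ := hL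
    obtain ⟨M⟩ := hG.nonempty_firingModel hU
    exact M.exists_acyclicG_generates

/-- a finite ULD lattice `L ∈ L(CFG)` is generated by a CFG on an acyclic
directed multigraph reaching a unique fixed point iff the directed graph `𝒢` on the
meet-irreducibles of `L` is acyclic. -/
theorem stmt16 {L : Type*} [Lattice L] [Fintype L] [BoundedOrder L]
    (hULD : IsULD L) (hLCFG : MemLCFG L) :
    (∃ (V : Type) (_ : Finite V) (E : V → V → ℕ) (O : V → ℕ),
      AcyclicG E ∧ ReachesUFP E O ∧ Generates E O L) ↔ GAcyclic L := by
  obtain ⟨V, _, E, O, hU, hG⟩ := hLCFG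
  exact stmt16_general ⟨V, E, O, fun _ => Set.toFinite _, hU, hG⟩
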